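/- Let t, k, n be positive integers with t ≥ 7, 2 ≤ k ≤ ⌊t/2⌋ − 1, N = (2^k − 1)·2^{t+1−k}, and 2^t < n < N. Set d = N − n, x = ⌊d / 2^{t+1−k}⌋, and p = ⌊log₂(x+1)⌋ if x > 0 and p = 0 if x = 0. Then there exists a connected simple graph G' on n vertices with exactly (k + 1 − p)·n − (2t − k + 2p + 4)·2^{k−1} + t − k − (p − 2)·2^p edges such that every vertex u of G' has broadcast time b(u) ≤ t + 1. -/

import Mathlib

/-- A broadcast protocol from originator `u` completing in `b` time units:
a nondecreasing sequence of informed sets `I 0 = {u}`, `I b = univ`, where at each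
step every newly informed vertex is called by a distinct previously informed neighbor. -/
def IsBroadcastProtocol {V : Type*} (G : SimpleGraph V) (u : V) (b : ℕ) : Prop :=
  ∃ I : ℕ → Set V,
    I 0 = {u} ∧
    (∀ i, I i ⊆ I (i + 1)) ∧
    I b = Set.univ ∧
    ∀ i, ∃ f : (I (i + 1) \ I i : Set V) → (I i : Set V),
      Function.Injective f ∧ ∀ v, G.Adj (f v) v

/-- The broadcast time `b(u)`: the minimum number of time units needed to broadcast
from `u` to all vertices. -/
noncomputable def broadcastTime {V : Type*} (G : SimpleGraph V) (u : V) : ℕ :=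
  sInf {b | IsBroadcastProtocol G u b}

/-- The broadcast function `B(n)`: the minimum number of edges of a broadcast graph on
`n` vertices, i.e. a connected graph in which every vertex can broadcast within
`⌈log₂ n⌉` time units. -/
noncomputable def broadcastFunction (n : ℕ) : ℕ :=
  sInf {m | ∃ G : SimpleGraph (Fin n), G.Connected ∧ G.edgeSet.ncard = m ∧
    ∀ u, broadcastTime G u ≤ Nat.clog 2 n}

/-!
Write `k = h + p + 1` and `t = s + k`. The vertices are arranged in `M = 2 ^ (h + 1) - 1` columns of
heights between `2 ^ (s + p) + 2 ^ (p + 3)` and `2 ^ (s + p + 1)`; such heights with sum `n` exist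
because `m + p` is the logarithm of `2 ^ (t + 1) - n`, where `m = t + 1 - k`.

Row `0` of the columns is a circulant graph with jumps `2 ^ j` for `j ≤ h`, and every vertex has
links of the lengths `2 ^ j` with `j < h` into it. In `h` rounds the originator and the vertices it
has informed inform row `0` of `2 ^ h - 1` further columns. In the next round these call row `0` of
the remaining columns, while the originator calls a vertex in the low rows of its own column. The
last `s + p + 1` rounds run within the columns: there the first `2 ^ q` rows, `q = p + 3`, form a
hypercube, and a higher row is joined to the row obtained by clearing its leading bit, so that row
`e` is informed from any low row `r` by correcting the bits of `r` to those of `e` from the lowest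
one on.

A row just after a power of two needs no further edge in its column, since clearing its leading
bit already leads to a low row; these savings make the edge count at most the required one, and
the missing edges can be added arbitrarily.
-/

open Finset

section Rounds

variable {V : Type*} {G : SimpleGraph V} {A B C : Set V} {a b : ℕ}

/-- One round of calls in `G` enlarges the informed set `A` to `B`. The round is recorded by the
function sending a caller to the vertex it calls, which makes the calls pairwise distinct. -/
def IsCallRound (G : SimpleGraph V) (A B : Set V) : Prop :=
  A ⊆ B ∧ ∃ call : V → V, ∀ v ∈ B \ A, ∃ w ∈ A, call w = v ∧ G.Adj w v

/-- The vertices of `A` can inform exactly those of `B` in `b` rounds of calls in `G`. -/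
def InformsIn (G : SimpleGraph V) (b : ℕ) (A B : Set V) : Prop :=
  ∃ I : ℕ → Set V, I 0 = A ∧ I b = B ∧ ∀ i < b, IsCallRound G (I i) (I (i + 1))

lemma isCallRound_fromRel {r : V → V → Prop} (hAB : A ⊆ B) (call : V → V)
    (h : ∀ v ∈ B \ A, ∃ w ∈ A, call w = v ∧ (r w v ∨ r v w)) :
    IsCallRound (SimpleGraph.fromRel r) A B := by
  refine ⟨hAB, call, fun v hv => ?_⟩
  obtain ⟨w, hw, hcall, hr⟩ := h v hv
  exact ⟨w, hw, hcall, (SimpleGraph.fromRel_adj r w v).2 ⟨fun e => hv.2 (e ▸ hw), hr⟩⟩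

lemma IsCallRound.refl (G : SimpleGraph V) (A : Set V) : IsCallRound G A A :=
  ⟨subset_rfl, id, fun _ hv => absurd hv.1 hv.2⟩

lemma IsCallRound.informsIn (h : IsCallRound G A B) : InformsIn G 1 A B := by
  refine ⟨fun i => if i = 0 then A else B, by simp, by simp, fun i hi => ?_⟩
  obtain rfl : i = 0 := Nat.lt_one_iff.1 hi
  simpa using h

lemma InformsIn.trans (hAB : InformsIn G a A B) (hBC : InformsIn G b B C) :
    InformsIn G (a + b) A C := by
  obtain ⟨I, I_zero, I_last, I_round⟩ := hAB
  obtain ⟨J, J_zero, J_last, J_round⟩ := hBC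
  have splice (i : ℕ) : (if a + i ≤ a then I (a + i) else J (a + i - a)) = J i := by
    rcases i.eq_zero_or_pos with rfl | hi
    · simp [I_last, J_zero]
    · simp [hi.ne']
  refine ⟨fun i => if i ≤ a then I i else J (i - a), by simpa using I_zero,
    (splice b).trans J_last, fun i hi => ?_⟩
  rcases lt_or_ge i a with hia | hia
  · simpa only [hia.le, Nat.succ_le_of_lt hia, if_true] using I_round i hia
  · obtain ⟨j, rfl⟩ := Nat.exists_eq_add_of_le hia
    have := J_round j (Nat.lt_of_add_lt_add_left hi)
    rwa [← splice j, ← splice (j + 1)] at this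

lemma InformsIn.exists_rounds (h : InformsIn G b A B) :
    ∃ I : ℕ → Set V, I 0 = A ∧ I b = B ∧ (∀ i, I i ⊆ B) ∧ ∀ i, IsCallRound G (I i) (I (i + 1)) := by
  obtain ⟨I, I_zero, I_last, I_round⟩ := h
  have round (i : ℕ) : IsCallRound G (I (min i b)) (I (min (i + 1) b)) := by
    rcases lt_or_ge i b with hib | hib
    · simpa only [min_eq_left hib.le, min_eq_left (Nat.succ_le_of_lt hib)] using I_round i hib
    · simpa only [min_eq_right hib, min_eq_right (hib.trans i.le_succ)] using .refl G (I b)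
  refine ⟨fun i => I (min i b), by simpa using I_zero, by simpa using I_last, fun i => ?_, round⟩
  calc I (min i b) ⊆ I (min (max i b) b) :=
        monotone_nat_of_le_succ (fun i => (round i).1) (le_max_left i b)
    _ = B := by rw [min_eq_right (le_max_right i b), I_last]

lemma InformsIn.isBroadcastProtocol_comap {W : Type*} {φ : W → V} (hφ : φ.Injective) {u : W}
    (h : InformsIn G b {φ u} (Set.range φ)) : IsBroadcastProtocol (G.comap φ) u b := by
  obtain ⟨I, I_zero, I_last, I_sub, I_round⟩ := h.exists_rounds
  refine ⟨fun i => φ ⁻¹' I i, ?_, fun i => Set.preimage_mono (I_round i).1, ?_, fun i => ?_⟩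
  · change φ ⁻¹' I 0 = {u}
    rw [I_zero, ← Set.image_singleton, hφ.preimage_image]
  · change φ ⁻¹' I b = Set.univ
    rw [I_last, Set.preimage_range]
  · obtain ⟨-, call, hcall⟩ := I_round i
    have exists_caller (v : (φ ⁻¹' I (i + 1) \ φ ⁻¹' I i : Set W)) :
        ∃ w : (φ ⁻¹' I i : Set W), call (φ w) = φ v ∧ G.Adj (φ w) (φ v) := by
      obtain ⟨w, hw, hcall_w, hadj⟩ := hcall (φ v) v.2
      obtain ⟨w, rfl⟩ := I_sub i hw
      exact ⟨⟨w, hw⟩, hcall_w, hadj⟩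
    choose caller call_caller caller_adj using exists_caller
    refine ⟨caller, fun v v' hvv' => Subtype.ext (hφ ?_), caller_adj⟩
    rw [← call_caller v, ← call_caller v', hvv']

end Rounds

section Broadcast

variable {V : Type*} {G H : SimpleGraph V} {u : V} {b : ℕ}

lemma IsBroadcastProtocol.mono (hGH : G ≤ H) (h : IsBroadcastProtocol G u b) :
    IsBroadcastProtocol H u b := by
  obtain ⟨I, I_zero, I_mono, I_last, I_calls⟩ := h
  refine ⟨I, I_zero, I_mono, I_last, fun i => ?_⟩
  obtain ⟨f, f_inj, f_adj⟩ := I_calls i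
  exact ⟨f, f_inj, fun v => hGH (f_adj v)⟩

lemma IsBroadcastProtocol.broadcastTime_le (h : IsBroadcastProtocol G u b) :
    broadcastTime G u ≤ b :=
  Nat.sInf_le h

lemma IsBroadcastProtocol.reachable (h : IsBroadcastProtocol G u b) (v : V) :
    G.Reachable u v := by
  obtain ⟨I, I_zero, -, I_last, I_calls⟩ := h
  have reachable_of_mem (i : ℕ) : ∀ v ∈ I i, G.Reachable u v := by
    induction i with
    | zero =>
      rintro v hv
      rw [I_zero, Set.mem_singleton_iff] at hv
      rw [hv]
    | succ i ih =>
      intro v hv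
      by_cases hvi : v ∈ I i
      · exact ih v hvi
      · obtain ⟨f, -, f_adj⟩ := I_calls i
        exact (ih _ (f ⟨v, hv, hvi⟩).2).trans (f_adj ⟨v, hv, hvi⟩).reachable
  exact reachable_of_mem b v (I_last ▸ Set.mem_univ v)

lemma exists_le_ncard_edgeSet_eq [Finite V] {m : ℕ} (hGm : G.edgeSet.ncard ≤ m)
    (hm : m ≤ (Nat.card V).choose 2) : ∃ H, G ≤ H ∧ H.edgeSet.ncard = m := by
  classical
  have := Fintype.ofFinite V
  have ncard_top : (⊤ : SimpleGraph V).edgeSet.ncard = (Nat.card V).choose 2 := by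
    rw [← SimpleGraph.coe_edgeFinset, Set.ncard_coe_finset,
      SimpleGraph.card_edgeFinset_top_eq_card_choose_two, Nat.card_eq_fintype_card]
  obtain ⟨E, hGE, hE, rfl⟩ := Set.exists_subsuperset_card_eq
    (SimpleGraph.edgeSet_mono le_top) hGm (ncard_top ▸ hm)
  have edgeSet_eq : (SimpleGraph.fromEdgeSet E).edgeSet = E := by
    rw [SimpleGraph.edgeSet_fromEdgeSet, sdiff_eq_left, Set.disjoint_left]
    exact fun e he => SimpleGraph.not_isDiag_of_mem_edgeSet _ (hE he)
  refine ⟨SimpleGraph.fromEdgeSet E, ?_, by rw [edgeSet_eq]⟩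
  rwa [← SimpleGraph.edgeSet_subset_edgeSet, edgeSet_eq]

lemma exists_connected_broadcastTime_le [Finite V] [Nonempty V] {m : ℕ}
    (hG : ∀ u, IsBroadcastProtocol G u b) (hGm : G.edgeSet.ncard ≤ m)
    (hm : m ≤ (Nat.card V).choose 2) :
    ∃ H : SimpleGraph V, H.Connected ∧ H.edgeSet.ncard = m ∧ ∀ u, broadcastTime H u ≤ b := by
  obtain ⟨H, hGH, hHm⟩ := exists_le_ncard_edgeSet_eq hGm hm
  have hH (u : V) : IsBroadcastProtocol H u b := (hG u).mono hGH
  exact ⟨H, ⟨fun u => (hH u).reachable⟩, hHm, fun u => (hH u).broadcastTime_le⟩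

end Broadcast

lemma ncard_edgeSet_comap_fromRel_le {V W : Type*} [Fintype W] (out : V → Finset V) (φ : W ↪ V) :
    ((SimpleGraph.fromRel fun v w => w ∈ out v).comap φ).edgeSet.ncard ≤ ∑ v, #(out (φ v)) := by
  classical
  set E : Finset (Sym2 V) := univ.biUnion fun v : W => (out (φ v)).image fun w => s(φ v, w)
  have mem_E {e : Sym2 W}
      (he : e ∈ ((SimpleGraph.fromRel fun v w => w ∈ out v).comap φ).edgeSet) :
      Sym2.map φ e ∈ E := by
    induction e with
    | _ x y =>
      have he : (SimpleGraph.fromRel fun v w => w ∈ out v).Adj (φ x) (φ y) := he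
      simp only [E, mem_biUnion, mem_univ, true_and, mem_image]
      rcases ((SimpleGraph.fromRel_adj _ _ _).1 he).2 with h | h
      · exact ⟨x, φ y, h, rfl⟩
      · exact ⟨y, φ x, h, Sym2.eq_swap⟩
  calc _ ≤ (E : Set (Sym2 V)).ncard :=
        Set.ncard_le_ncard_of_injOn _ (fun _ => mem_E) (Sym2.map.injective φ.injective).injOn
    _ = #E := Set.ncard_coe_finset E
    _ ≤ ∑ v, #(out (φ v)) := card_biUnion_le.trans (sum_le_sum fun _ _ => card_image_le)

lemma exists_forall_le_sum_eq {C : Type*} [Fintype C] {n lo hi : ℕ} (hlo : Fintype.card C * lo ≤ n)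
    (hhi : n ≤ Fintype.card C * hi) :
    ∃ height : C → ℕ, (∀ c, lo ≤ height c) ∧ (∀ c, height c ≤ hi) ∧ ∑ c, height c = n := by
  classical
  induction n, hlo using Nat.le_induction with
  | base =>
    refine ⟨fun _ => lo, fun _ => le_rfl, fun c => ?_, by simp⟩
    exact Nat.le_of_mul_le_mul_left hhi (Fintype.card_pos_iff.2 ⟨c⟩)
  | succ n hlo ih =>
    obtain ⟨height, hheight_lo, hheight_hi, rfl⟩ := ih (n.le_succ.trans hhi)
    obtain ⟨c, -, hc⟩ : ∃ c ∈ univ, height c < hi :=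
      exists_lt_of_sum_lt (by simpa using Nat.lt_of_succ_le hhi)
    refine ⟨height + Pi.single c 1, fun c' => (hheight_lo c').trans (Nat.le_add_right _ _),
      fun c' => ?_, by simp [sum_add_distrib]⟩
    rcases eq_or_ne c' c with rfl | hne
    · simpa using hc
    · simpa [hne] using hheight_hi c'

lemma exists_enumeration_cells {C : Type*} [Fintype C] {height : C → ℕ} {n : ℕ}
    (hn : ∑ c, height c = n) :
    ∃ φ : Fin n ↪ C × ℕ, Set.range φ = {v | v.2 < height v.1} ∧
      ∀ g : C × ℕ → ℕ, ∑ i, g (φ i) = ∑ c, ∑ e ∈ range (height c), g (c, e) := by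
  classical
  set cells : Finset (C × ℕ) := univ.biUnion fun c => (range (height c)).image (Prod.mk c)
  have mem_cells (v : C × ℕ) : v ∈ cells ↔ v.2 < height v.1 := by
    simp [cells, Prod.ext_iff]
  have sum_cells (g : C × ℕ → ℕ) : ∑ v ∈ cells, g v = ∑ c, ∑ e ∈ range (height c), g (c, e) :=
    sum_finset_product _ _ _ (by simp [mem_cells])
  have card_cells : #cells = n := by
    rw [card_eq_sum_ones, sum_cells, ← hn]
    simp
  set enum := (cells.equivFinOfCardEq card_cells).symm
  refine ⟨enum.toEmbedding.trans (Function.Embedding.subtype _), ?_, fun g => ?_⟩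
  · exact ((enum.surjective.range_comp Subtype.val).trans Subtype.range_coe).trans
      (Set.ext mem_cells)
  · exact (enum.sum_comp fun v => g v).trans ((sum_coe_sort cells g).trans (sum_cells g))

section Column

variable {q b e i r : ℕ}

lemma xor_two_pow_lt (hle : 2 ^ i ≤ e) (hlt : e < 2 ^ (i + 1)) : e ^^^ 2 ^ i < 2 ^ i := by
  have hdiv : e / 2 ^ i = 1 := Nat.div_eq_of_lt_le (by simpa using hle) (by
    simpa [pow_succ'] using hlt)
  rw [← Nat.div_eq_zero_iff_lt (by positivity), Nat.xor_div_two_pow, hdiv,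
    Nat.div_self (by positivity), Nat.xor_self]

lemma two_pow_add_xor_two_pow (he : e < 2 ^ b) : (2 ^ b + e) ^^^ 2 ^ b = e := by
  have hlt : (2 ^ b + e) ^^^ 2 ^ b < 2 ^ b :=
    xor_two_pow_lt (Nat.le_add_right _ _) (by rw [pow_succ]; omega)
  rw [← Nat.mod_eq_of_lt hlt, Nat.xor_mod_two_pow, Nat.add_mod_left, Nat.mod_self, Nat.xor_zero,
    Nat.mod_eq_of_lt he]

/-- The out-neighbours of the row `e` in an orientation of the edges within a column. The first
`2 ^ q` rows form a hypercube, a later row `e` is joined to the row obtained by clearing its leading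
bit, and also to the row `0` if that row is not one of the first `2 ^ q`. -/
def columnOut (q e : ℕ) : Finset ℕ :=
  if e < 2 ^ q then e.bitIndices.toFinset.image fun i => e ^^^ 2 ^ i
  else if e ^^^ 2 ^ Nat.log 2 e < 2 ^ q then {e ^^^ 2 ^ Nat.log 2 e}
  else {e ^^^ 2 ^ Nat.log 2 e, 0}

lemma exists_eq_or_mem_columnOut (q e : ℕ) : ∃ r < 2 ^ q, r = e ∨ r ∈ columnOut q e := by
  unfold columnOut
  split_ifs with hlow hspecial
  · exact ⟨e, hlow, .inl rfl⟩
  · exact ⟨_, hspecial, .inr (mem_singleton_self _)⟩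
  · exact ⟨0, by positivity, .inr (by simp)⟩

lemma xor_mem_columnOut_or (he : e < 2 ^ q) (hi : i < q) :
    e ^^^ 2 ^ i ∈ columnOut q e ∨ e ∈ columnOut q (e ^^^ 2 ^ i) := by
  have hflip : e ^^^ 2 ^ i < 2 ^ q := Nat.xor_lt_two_pow he (Nat.pow_lt_pow_right one_lt_two hi)
  rw [columnOut, columnOut, if_pos he, if_pos hflip]
  by_cases hbit : e.testBit i
  · exact .inl (mem_image.2 ⟨i, by simpa using hbit, rfl⟩)
  · exact .inr (mem_image.2 ⟨i, by simpa using hbit, by simp⟩)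

lemma xor_log_mem_columnOut (he : 2 ^ q ≤ e) : e ^^^ 2 ^ Nat.log 2 e ∈ columnOut q e := by
  rw [columnOut, if_neg he.not_gt]
  split_ifs <;> simp

/-- Once the rows `v` with `v ^^^ r < 2 ^ i` are informed, the row `e` is called by `e ^^^ 2 ^ i`,
which exists in every column that contains `e` and the first `2 ^ q` rows. -/
lemma column_call (hr : r < 2 ^ q) (hle : 2 ^ i ≤ e ^^^ r) (hlt : e ^^^ r < 2 ^ (i + 1)) :
    e ^^^ 2 ^ i ^^^ r < 2 ^ i ∧ (e ^^^ 2 ^ i < 2 ^ q ∨ e ^^^ 2 ^ i < e) ∧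
      (e ^^^ 2 ^ i ∈ columnOut q e ∨ e ∈ columnOut q (e ^^^ 2 ^ i)) := by
  have hdist : e ^^^ 2 ^ i ^^^ r < 2 ^ i := by
    rw [Nat.xor_right_comm]
    exact xor_two_pow_lt hle hlt
  have he : e ^^^ r ^^^ r = e := Nat.xor_xor_cancel_right ..
  rcases lt_or_ge i q with hiq | hqi
  · have he_lt : e < 2 ^ q :=
      he ▸ Nat.xor_lt_two_pow (hlt.trans_le (Nat.pow_le_pow_right two_pos hiq)) hr
    exact ⟨hdist, .inl (Nat.xor_lt_two_pow he_lt (Nat.pow_lt_pow_right one_lt_two hiq)),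
      xor_mem_columnOut_or he_lt hiq⟩
  · have hri : r < 2 ^ i := hr.trans_le (Nat.pow_le_pow_right two_pos hqi)
    have he_lt : e < 2 ^ (i + 1) :=
      he ▸ Nat.xor_lt_two_pow hlt (hri.trans (Nat.pow_lt_pow_right one_lt_two i.lt_succ_self))
    have he_ge : 2 ^ i ≤ e := by
      by_contra! h
      exact hle.not_gt (Nat.xor_lt_two_pow h hri)
    have hlog : Nat.log 2 e = i := Nat.log_eq_of_pow_le_of_lt_pow he_ge he_lt
    refine ⟨hdist, .inr ((xor_two_pow_lt he_ge he_lt).trans_le he_ge), .inl ?_⟩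
    exact hlog ▸ xor_log_mem_columnOut ((Nat.pow_le_pow_right two_pos hqi).trans he_ge)

lemma two_mul_sum_length_bitIndices (q : ℕ) :
    2 * ∑ e ∈ range (2 ^ q), e.bitIndices.length = q * 2 ^ q := by
  have split_parity (n : ℕ) : ∑ e ∈ range (2 * n), e.bitIndices.length =
      2 * ∑ e ∈ range n, e.bitIndices.length + n := by
    induction n with
    | zero => simp
    | succ n ih =>
      rw [Nat.mul_succ, sum_range_succ, sum_range_succ, ih, sum_range_succ,
        Nat.bitIndices_two_mul, Nat.bitIndices_two_mul_add_one]
      simp only [List.length_map, List.length_cons]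
      ring
  induction q with
  | zero => simp
  | succ q ih =>
    rw [pow_succ', split_parity, ih]
    ring

lemma card_columnOut_le_length_bitIndices (he : e < 2 ^ q) :
    #(columnOut q e) ≤ e.bitIndices.length := by
  rw [columnOut, if_pos he]
  exact card_image_le.trans (List.toFinset_card_le _)

lemma card_columnOut_le_two (he : 2 ^ q ≤ e) : #(columnOut q e) ≤ 2 := by
  rw [columnOut, if_neg he.not_gt]
  split_ifs
  · simp
  · exact card_le_two

lemma card_columnOut_two_pow_add (hqb : q ≤ b) (he : e < 2 ^ q) :
    #(columnOut q (2 ^ b + e)) = 1 := by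
  have hpow : 2 ^ q ≤ 2 ^ b := Nat.pow_le_pow_right two_pos hqb
  have hlog : Nat.log 2 (2 ^ b + e) = b :=
    Nat.log_eq_of_pow_le_of_lt_pow (Nat.le_add_right _ _) (by rw [pow_succ]; omega)
  rw [columnOut, hlog, two_pow_add_xor_two_pow (he.trans_le hpow),
    if_neg (hpow.trans (Nat.le_add_right _ _)).not_gt, if_pos he, card_singleton]

lemma sum_card_columnOut_le_of_le {R H : ℕ} (hR : 2 ^ q ≤ R) (hRH : R ≤ H) :
    ∑ e ∈ range H, #(columnOut q e) + 2 * R ≤ ∑ e ∈ range R, #(columnOut q e) + 2 * H := by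
  induction H, hRH using Nat.le_induction with
  | base => rfl
  | succ H hRH ih =>
    have := card_columnOut_le_two (hR.trans hRH)
    rw [sum_range_succ]
    omega

lemma sum_card_columnOut_two_pow_add (hqb : q ≤ b) :
    ∑ e ∈ range (2 ^ b + 2 ^ q), #(columnOut q e) =
      ∑ e ∈ range (2 ^ b), #(columnOut q e) + 2 ^ q := by
  rw [sum_range_add, sum_congr rfl fun e he => card_columnOut_two_pow_add hqb (mem_range.1 he)]
  simp

/-- Two edges per row, less one for each of the first `2 ^ q` rows after a power of two. -/
lemma two_mul_sum_card_columnOut_range_two_pow_le (hqb : q ≤ b) :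
    2 * ∑ e ∈ range (2 ^ b), #(columnOut q e) + 2 ^ (q + 1) * (b + 2 - q) ≤
      4 * 2 ^ b + q * 2 ^ q := by
  induction b, hqb using Nat.le_induction with
  | base =>
    have hlow : ∑ e ∈ range (2 ^ q), #(columnOut q e) ≤
        ∑ e ∈ range (2 ^ q), e.bitIndices.length :=
      sum_le_sum fun e he => card_columnOut_le_length_bitIndices (mem_range.1 he)
    rw [← two_mul_sum_length_bitIndices q, Nat.add_sub_cancel_left, pow_succ]
    omega
  | succ b hqb ih =>
    have hpow : 2 ^ q ≤ 2 ^ b := Nat.pow_le_pow_right two_pos hqb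
    have hsum := sum_card_columnOut_le_of_le (q := q) (R := 2 ^ b + 2 ^ q) (H := 2 ^ (b + 1))
      (Nat.le_add_left _ _) (by rw [pow_succ]; omega)
    rw [sum_card_columnOut_two_pow_add hqb] at hsum
    rw [show b + 1 + 2 - q = b + 2 - q + 1 by omega, Nat.mul_succ]
    rw [pow_succ] at hsum ⊢
    rw [pow_succ 2 q] at ih ⊢
    omega

lemma two_mul_sum_card_columnOut_le {H : ℕ} (hqb : q ≤ b) (hH : 2 ^ b + 2 ^ q ≤ H) :
    2 * ∑ e ∈ range H, #(columnOut q e) + 2 ^ (q + 1) * (b + 3 - q) ≤ 4 * H + q * 2 ^ q := by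
  have hpow := two_mul_sum_card_columnOut_range_two_pow_le hqb
  have hsum := sum_card_columnOut_le_of_le (Nat.le_add_left _ _) hH
  rw [sum_card_columnOut_two_pow_add hqb] at hsum
  rw [show b + 3 - q = b + 2 - q + 1 by omega, Nat.mul_succ]
  rw [pow_succ 2 q] at hpow ⊢
  omega

end Column

section Tower

variable {M h q : ℕ}

/-- The out-neighbours of a cell `(column, row)` in an orientation of the tower graph: those within
its column, and the cells in row `0` of the columns `2 ^ j` further on, cyclically. -/
def towerOut (M h q : ℕ) (v : ZMod M × ℕ) : Finset (ZMod M × ℕ) :=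
  (range (if v.2 = 0 then h + 1 else h)).image (fun j => (v.1 + 2 ^ j, 0)) ∪
    (columnOut q v.2).image (Prod.mk v.1)

/-- The broadcast graph on cells `(column, row)`, to be restricted to columns of given heights.
The row `0` is a circulant graph with jumps `± 2 ^ j` for `j ≤ h`, and every other cell is linked to
the row `0` as well. -/
def towerGraph (M h q : ℕ) : SimpleGraph (ZMod M × ℕ) :=
  SimpleGraph.fromRel fun v w => w ∈ towerOut M h q v

lemma jump_mem_towerOut {v : ZMod M × ℕ} {j : ℕ} (hj : j < h ∨ v.2 = 0 ∧ j = h) :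
    (v.1 + 2 ^ j, 0) ∈ towerOut M h q v := by
  refine mem_union_left _ (mem_image_of_mem _ (mem_range.2 ?_))
  split_ifs <;> omega

lemma column_mem_towerOut {v : ZMod M × ℕ} {r : ℕ} (hr : r ∈ columnOut q v.2) :
    (v.1, r) ∈ towerOut M h q v :=
  mem_union_right _ (mem_image_of_mem _ hr)

lemma card_towerOut_le (v : ZMod M × ℕ) :
    #(towerOut M h q v) ≤ h + (if v.2 = 0 then 1 else 0) + #(columnOut q v.2) := by
  refine (card_union_le _ _).trans (add_le_add (card_image_le.trans ?_) card_image_le)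
  rw [card_range]
  split_ifs <;> rfl

/-- The cells informed after `j` rounds in which every informed cell calls a cell in row `0`. -/
def cyclicFront (u : ZMod M × ℕ) (j : ℕ) : Set (ZMod M × ℕ) :=
  insert u ((fun s : ℕ => (u.1 + s, 0)) '' Set.Ico 1 (2 ^ j))

/-- The cells informed after `i` rounds of calls within the columns, started at the row `r` in the
column of the originator `u` and at the row `0` in the others. -/
def columnFront (height : ZMod M → ℕ) (u : ZMod M × ℕ) (r i : ℕ) : Set (ZMod M × ℕ) :=
  insert u {v | v.2 < height v.1 ∧ v.2 ^^^ (if v.1 = u.1 then r else 0) < 2 ^ i}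

lemma isCallRound_cyclicFront {u : ZMod M × ℕ} {j : ℕ} (hj : j < h) :
    IsCallRound (towerGraph M h q) (cyclicFront u j) (cyclicFront u (j + 1)) := by
  have hpow : 2 ^ j ≤ 2 ^ (j + 1) := Nat.pow_le_pow_right two_pos j.le_succ
  refine isCallRound_fromRel
    (Set.insert_subset_insert (Set.image_mono (Set.Ico_subset_Ico_right hpow)))
    (fun w => (w.1 + 2 ^ j, 0)) ?_
  rintro v ⟨hv | ⟨s, ⟨hs_pos, hs_lt⟩, rfl⟩, hv'⟩
  · exact absurd (.inl hv) hv'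
  have hs : 2 ^ j ≤ s := by
    by_contra! hs
    exact hv' (.inr ⟨s, ⟨hs_pos, hs⟩, rfl⟩)
  obtain ⟨s, rfl⟩ := Nat.exists_eq_add_of_le' hs
  rcases s.eq_zero_or_pos with rfl | hs_pos
  · exact ⟨u, .inl rfl, by simp, .inl (by simpa using jump_mem_towerOut (.inl hj))⟩
  · have hs_lt : s < 2 ^ j := by rw [pow_succ] at hs_lt; omega
    refine ⟨(u.1 + s, 0), .inr ⟨s, ⟨hs_pos, hs_lt⟩, rfl⟩, ?_, .inl ?_⟩
    · simp [add_assoc]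
    · simpa [add_assoc] using jump_mem_towerOut (v := (u.1 + (s : ZMod M), 0)) (.inl hj)

lemma zmod_add_natCast_ne_self {c : ZMod M} {s : ℕ} (hs_pos : 0 < s) (hs_lt : s < M) :
    c + s ≠ c := by
  rw [ne_eq, add_eq_left, ZMod.natCast_eq_zero_iff]
  exact Nat.not_dvd_of_pos_of_lt hs_pos hs_lt

lemma cyclicFront_subset_columnFront {height : ZMod M → ℕ} {u : ZMod M × ℕ} {r : ℕ}
    (hM : 2 ^ h ≤ M) (hheight : ∀ c, 0 < height c) :
    cyclicFront u h ⊆ columnFront height u r 0 := by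
  refine Set.insert_subset_insert ?_
  rintro _ ⟨s, ⟨hs_pos, hs_lt⟩, rfl⟩
  exact ⟨hheight _, by simp [zmod_add_natCast_ne_self hs_pos (hs_lt.trans_le hM)]⟩

lemma add_two_pow_mem_cyclicFront {u : ZMod M × ℕ} {c : ZMod M} (hM : M + 1 = 2 ^ (h + 1))
    (hc : c ≠ u.1) (hnew : (c, 0) ∉ cyclicFront u h) :
    c + 2 ^ h ≠ u.1 ∧ (c + 2 ^ h, 0) ∈ cyclicFront u h := by
  have hpos : 0 < 2 ^ h := by positivity
  rw [pow_succ] at hM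
  have : NeZero M := ⟨by omega⟩
  obtain ⟨s, hs_pos, hs_lt, rfl⟩ : ∃ s : ℕ, 0 < s ∧ s < M ∧ c = u.1 + s :=
    ⟨(c - u.1).val, ZMod.val_pos.2 (sub_ne_zero.2 hc), ZMod.val_lt _, by simp⟩
  have hs : 2 ^ h ≤ s := by
    by_contra! hs
    exact hnew (.inr ⟨s, ⟨hs_pos, hs⟩, rfl⟩)
  have wrap : (u.1 + s + 2 ^ h : ZMod M) = u.1 + (s + 2 ^ h - M : ℕ) := by
    rw [Nat.cast_sub (by omega)]
    simp [add_assoc]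
  rw [wrap]
  exact ⟨zmod_add_natCast_ne_self (by omega) (by omega),
    .inr ⟨s + 2 ^ h - M, ⟨by omega, by omega⟩, rfl⟩⟩

/-- In this round `u` itself calls its relay `r` within its own column: the `2 ^ h - 1` columns not
reached yet are called by the other `2 ^ h - 1` informed cells, along the jump `- 2 ^ h`. -/
lemma isCallRound_columnFront_zero {height : ZMod M → ℕ} {u : ZMod M × ℕ} {r : ℕ}
    (hM : M + 1 = 2 ^ (h + 1)) (hheight : ∀ c, 0 < height c)
    (hr : r = u.2 ∨ r ∈ columnOut q u.2) :
    IsCallRound (towerGraph M h q) (cyclicFront u h) (columnFront height u r 0) := by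
  have hpow : 2 ^ h ≤ M := by
    have : 0 < 2 ^ h := by positivity
    rw [pow_succ] at hM
    omega
  refine isCallRound_fromRel (cyclicFront_subset_columnFront hpow hheight)
    (fun w => if w.1 = u.1 then (u.1, r) else (w.1 - 2 ^ h, 0)) ?_
  rintro ⟨c, e⟩ ⟨hv | ⟨-, hdist⟩, hnew⟩
  · exact absurd (.inl hv) hnew
  rw [pow_zero, Nat.lt_one_iff, Nat.xor_eq_zero_iff] at hdist
  by_cases hc : c = u.1
  · obtain rfl : e = r := by simpa [hc] using hdist
    subst hc
    have hr : e ∈ columnOut q u.2 := hr.resolve_left fun hr => hnew (.inl (hr ▸ rfl))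
    exact ⟨u, .inl rfl, by simp, .inl (column_mem_towerOut hr)⟩
  · obtain rfl : e = 0 := by simpa [hc] using hdist
    obtain ⟨hne, hrelay⟩ := add_two_pow_mem_cyclicFront hM hc hnew
    exact ⟨(c + 2 ^ h, 0), hrelay, by simp [hne],
      .inr (jump_mem_towerOut (v := (c, 0)) (.inr ⟨rfl, rfl⟩))⟩

lemma isCallRound_columnFront {height : ZMod M → ℕ} {u : ZMod M × ℕ} {r i : ℕ}
    (hheight : ∀ c, 2 ^ q ≤ height c) (hr : r < 2 ^ q) :
    IsCallRound (towerGraph M h q) (columnFront height u r i) (columnFront height u r (i + 1)) := by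
  have hpow : 2 ^ i ≤ 2 ^ (i + 1) := Nat.pow_le_pow_right two_pos i.le_succ
  refine isCallRound_fromRel (Set.insert_subset_insert fun v hv => ⟨hv.1, hv.2.trans_le hpow⟩)
    (fun w => (w.1, w.2 ^^^ 2 ^ i)) ?_
  rintro ⟨c, e⟩ ⟨hv | ⟨hcell, hlt⟩, hv'⟩
  · exact absurd (.inl hv) hv'
  have hle : 2 ^ i ≤ e ^^^ (if c = u.1 then r else 0) := by
    by_contra! h
    exact hv' (.inr ⟨hcell, h⟩)
  have hstart : (if c = u.1 then r else 0) < 2 ^ q := by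
    split_ifs
    exacts [hr, by positivity]
  obtain ⟨hlt', hrow, hadj⟩ := column_call hstart hle hlt
  refine ⟨(c, e ^^^ 2 ^ i), .inr ⟨?_, hlt'⟩, by simp, ?_⟩
  · exact hrow.elim (fun h => h.trans_le (hheight c)) (fun h => h.trans hcell)
  · exact hadj.symm.imp (column_mem_towerOut (v := (c, e ^^^ 2 ^ i)))
      (column_mem_towerOut (v := (c, e)))

lemma columnFront_eq_cells {height : ZMod M → ℕ} {u : ZMod M × ℕ} {r a : ℕ}
    (hu : u.2 < height u.1) (hheight : ∀ c, height c ≤ 2 ^ a) (hr : r < 2 ^ a) :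
    columnFront height u r a = {v | v.2 < height v.1} := by
  refine Set.Subset.antisymm (Set.insert_subset hu fun v hv => hv.1) fun v hv => .inr ⟨hv, ?_⟩
  refine Nat.xor_lt_two_pow (hv.trans_le (hheight _)) ?_
  split_ifs
  exacts [hr, by positivity]

lemma informsIn_towerGraph {height : ZMod M → ℕ} {u : ZMod M × ℕ} {a : ℕ}
    (hM : M + 1 = 2 ^ (h + 1)) (hlo : ∀ c, 2 ^ q ≤ height c) (hhi : ∀ c, height c ≤ 2 ^ a)
    (hu : u.2 < height u.1) :
    InformsIn (towerGraph M h q) (h + 1 + a) {u} {v | v.2 < height v.1} := by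
  obtain ⟨r, hr, hru⟩ := exists_eq_or_mem_columnOut q u.2
  have cyclic : InformsIn (towerGraph M h q) h (cyclicFront u 0) (cyclicFront u h) :=
    ⟨cyclicFront u, rfl, rfl, fun _ => isCallRound_cyclicFront⟩
  have relay : InformsIn (towerGraph M h q) 1 (cyclicFront u h) (columnFront height u r 0) :=
    (isCallRound_columnFront_zero hM (fun c => (Nat.two_pow_pos q).trans_le (hlo c)) hru).informsIn
  have column : InformsIn (towerGraph M h q) a (columnFront height u r 0)
      (columnFront height u r a) :=
    ⟨columnFront height u r, rfl, rfl, fun _ _ => isCallRound_columnFront hlo hr⟩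
  rw [← columnFront_eq_cells hu hhi (hr.trans_le ((hlo u.1).trans (hhi u.1)))]
  simpa [cyclicFront] using (cyclic.trans relay).trans column

lemma two_mul_sum_card_towerOut_le {b H : ℕ} (c : ZMod M) (hqb : q ≤ b) (hH : 2 ^ b + 2 ^ q ≤ H) :
    2 * ∑ e ∈ range H, #(towerOut M h q (c, e)) + 2 ^ (q + 1) * (b + 3 - q) ≤
      2 * (h + 2) * H + (2 + q * 2 ^ q) := by
  have hcolumn := two_mul_sum_card_columnOut_le hqb hH
  have hsum : ∑ e ∈ range H, #(towerOut M h q (c, e)) ≤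
      h * H + 1 + ∑ e ∈ range H, #(columnOut q e) := by
    calc _ ≤ ∑ e ∈ range H, (h + (if e = 0 then 1 else 0) + #(columnOut q e)) :=
          sum_le_sum fun e _ => card_towerOut_le (c, e)
      _ = h * H + (if 0 < H then 1 else 0) + ∑ e ∈ range H, #(columnOut q e) := by
          simp [sum_add_distrib, mul_comm]
      _ ≤ _ := by split_ifs <;> omega
  linarith

lemma exists_isBroadcastProtocol_ncard_edgeSet_le {n b : ℕ} (hM : M + 1 = 2 ^ (h + 1))
    (hqb : q ≤ b) (hlo : M * (2 ^ b + 2 ^ q) ≤ n) (hhi : n ≤ M * 2 ^ (b + 1)) :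
    ∃ G : SimpleGraph (Fin n), (∀ u, IsBroadcastProtocol G u (h + 1 + (b + 1))) ∧
      2 * G.edgeSet.ncard + M * (2 ^ (q + 1) * (b + 3 - q)) ≤
        2 * (h + 2) * n + M * (2 + q * 2 ^ q) := by
  have : NeZero M := ⟨fun hM0 => (Nat.one_lt_two_pow h.succ_ne_zero).ne (by simpa [hM0] using hM)⟩
  obtain ⟨height, height_lo, height_hi, height_sum⟩ := exists_forall_le_sum_eq (C := ZMod M)
    (n := n) (lo := 2 ^ b + 2 ^ q) (hi := 2 ^ (b + 1)) (by rwa [ZMod.card]) (by rwa [ZMod.card])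
  obtain ⟨φ, φ_range, φ_sum⟩ := exists_enumeration_cells height_sum
  refine ⟨(towerGraph M h q).comap φ, fun u => ?_, ?_⟩
  · have hu : (φ u).2 < height (φ u).1 := φ_range.subset ⟨u, rfl⟩
    refine InformsIn.isBroadcastProtocol_comap φ.injective (φ_range ▸ ?_)
    exact informsIn_towerGraph hM (fun c => (Nat.le_add_left _ _).trans (height_lo c)) height_hi hu
  · calc _ ≤ 2 * ∑ c, ∑ e ∈ range (height c), #(towerOut M h q (c, e)) +
          M * (2 ^ (q + 1) * (b + 3 - q)) := by
          gcongr
          exact (ncard_edgeSet_comap_fromRel_le _ φ).trans_eq (φ_sum fun v => #(towerOut M h q v))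
      _ = ∑ c : ZMod M, (2 * ∑ e ∈ range (height c), #(towerOut M h q (c, e)) +
          2 ^ (q + 1) * (b + 3 - q)) := by
          simp [sum_add_distrib, mul_sum]
      _ ≤ ∑ c, (2 * (h + 2) * height c + (2 + q * 2 ^ q)) :=
          sum_le_sum fun c _ => two_mul_sum_card_towerOut_le c hqb (height_lo c)
      _ = 2 * (h + 2) * n + M * (2 + q * 2 ^ q) := by
          simp [sum_add_distrib, ← mul_sum, height_sum]

end Tower

lemma two_pow_log_gap_bounds {k m n p : ℕ} (hn : n ≤ (2 ^ k - 1) * 2 ^ m)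
    (hp : p = Nat.log 2 (((2 ^ k - 1) * 2 ^ m - n) / 2 ^ m + 1)) :
    n + 2 ^ (m + p) ≤ 2 ^ (m + k) ∧ 2 ^ (m + k) < n + 2 ^ (m + p + 1) := by
  set d := (2 ^ k - 1) * 2 ^ m - n
  have hgap : n + (d + 2 ^ m) = 2 ^ (m + k) := by
    have hsplit : (2 ^ k - 1) * 2 ^ m + 2 ^ m = 2 ^ (m + k) := by
      rw [← Nat.succ_mul, Nat.succ_eq_add_one, Nat.sub_add_cancel Nat.one_le_two_pow, pow_add,
        mul_comm]
    omega
  have hlog : m + p = Nat.log 2 (d + 2 ^ m) := by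
    have : m ≤ Nat.log 2 (d + 2 ^ m) := Nat.le_log_of_pow_le one_lt_two (Nat.le_add_left _ _)
    rw [hp, ← Nat.add_div_right _ (by positivity), Nat.log_div_base_pow, Nat.add_sub_cancel' this]
  rw [hlog, ← hgap]
  exact ⟨Nat.add_le_add_left (Nat.pow_log_le_self 2 (by positivity)) n,
    Nat.add_lt_add_left (Nat.lt_pow_succ_log_self one_lt_two _) n⟩

section Parameters

variable {h p s n : ℕ}

lemma mul_two_pow_add_two_pow_le {M : ℕ} (hM : 3 ≤ M) (hs : 5 ≤ s)
    (hn : (M + 1) * 2 ^ (s + p + 1) < n + 2 ^ (s + p + 2)) :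
    M * (2 ^ (s + p) + 2 ^ (p + 3)) ≤ n := by
  have hpow : 4 * 2 ^ (p + 3) ≤ 2 ^ (s + p) := by
    calc _ = 2 ^ (p + 5) := by ring
      _ ≤ _ := Nat.pow_le_pow_right two_pos (by omega)
  rw [show 2 ^ (s + p + 1) = 2 * 2 ^ (s + p) by ring,
    show 2 ^ (s + p + 2) = 4 * 2 ^ (s + p) by ring] at hn
  linarith [Nat.mul_le_mul_left M hpow, Nat.mul_le_mul_right (2 ^ (s + p)) hM]

/-- With `P = 2 ^ p` and `q = p + 3`: the savings over two edges per row found in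
`two_mul_sum_card_columnOut_le`, on the right, pay for the required saving over `(h + 2) * n` edges
and for the extra edges in row `0` and in the hypercubes. -/
lemma two_mul_edge_saving_le {M P : ℕ} (hM : 3 ≤ M) (hP : 1 ≤ P) (hs : h + p + 3 ≤ s)
    (hs' : p + 4 ≤ s) :
    (2 * s + h + 3 * p + 5) * ((M + 1) * P) + 2 * p * P + M * (2 + (p + 3) * (8 * P)) ≤
      M * (16 * P * s) := by
  suffices 3 * ((2 * s + h + 3 * p + 5) * ((M + 1) * P) + 2 * p * P +
      M * (2 + (p + 3) * (8 * P))) ≤ 3 * (M * (16 * P * s)) by omega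
  have hMP : 3 * P ≤ M * P := Nat.mul_le_mul_right P hM
  calc _ = (2 * s + h + 3 * p + 5) * (3 * (M * P) + 3 * P) + 2 * p * (3 * P) + 6 * (M * 1) +
          24 * (p + 3) * (M * P) := by ring
    _ ≤ (2 * s + h + 3 * p + 5) * (3 * (M * P) + M * P) + 2 * p * (M * P) + 6 * (M * P) +
          24 * (p + 3) * (M * P) := by gcongr
    _ = (8 * s + 4 * h + 38 * p + 98) * (M * P) := by ring
    _ ≤ 48 * s * (M * P) := by gcongr; omega
    _ = _ := by ring

lemma exists_isBroadcastProtocol_ncard_edgeSet_le_sub (hh : 1 ≤ h) (hs : h + p + 3 ≤ s)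
    (hs' : 5 ≤ s) (hn : n + 2 ^ (s + p + 1) ≤ 2 ^ (s + h + p + 2))
    (hn' : 2 ^ (s + h + p + 2) < n + 2 ^ (s + p + 2)) :
    ∃ G : SimpleGraph (Fin n), (∀ u, IsBroadcastProtocol G u (s + h + p + 2)) ∧
      (G.edgeSet.ncard : ℤ) ≤
        (h + 2) * n - (2 * s + h + 3 * p + 5) * 2 ^ (h + p) + s - (p - 2) * 2 ^ p := by
  obtain ⟨M, hM⟩ : ∃ M, M + 1 = 2 ^ (h + 1) := ⟨_, Nat.sub_add_cancel Nat.one_le_two_pow⟩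
  have hM3 : 3 ≤ M := by
    have : 2 ^ 2 ≤ 2 ^ (h + 1) := Nat.pow_le_pow_right two_pos (by omega)
    omega
  rw [show 2 ^ (s + h + p + 2) = (M + 1) * 2 ^ (s + p + 1) by rw [hM]; ring] at hn hn'
  have hlo := mul_two_pow_add_two_pow_le hM3 hs' hn'
  have hhi : n ≤ M * 2 ^ (s + p + 1) := by
    rw [Nat.succ_mul] at hn
    exact Nat.le_of_add_le_add_right hn
  obtain ⟨G, hG, hcard⟩ := exists_isBroadcastProtocol_ncard_edgeSet_le (b := s + p) hM
    (by omega : p + 3 ≤ s + p) hlo hhi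
  refine ⟨G, fun u => ?_, ?_⟩
  · rw [show s + h + p + 2 = h + 1 + (s + p + 1) by ring]
    exact hG u
  · have hsaving := two_mul_edge_saving_le hM3 (Nat.one_le_two_pow (n := p)) hs (by omega)
    rw [show s + p + 3 - (p + 3) = s by omega, show 2 ^ (p + 3 + 1) = 16 * 2 ^ p by ring,
      show 2 ^ (p + 3) = 8 * 2 ^ p by ring] at hcard
    rw [hM, show 2 ^ (h + 1) * 2 ^ p = 2 * 2 ^ (h + p) by ring] at hsaving
    zify at hcard hsaving
    linarith [pow_pos (two_pos (α := ℤ)) p, Int.natCast_nonneg s]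

lemma edge_count_le_choose_two (hs : h + p + 3 ≤ s) (hn : 2 ^ (s + h + p + 1) < n) :
    ((h + 2) * n - (2 * s + h + 3 * p + 5) * 2 ^ (h + p) + s - (p - 2) * 2 ^ p : ℤ) ≤
      n.choose 2 := by
  have : s + h + p + 1 < 2 ^ (s + h + p + 1) := Nat.lt_two_pow_self
  have hchoose : (h + 2) * n ≤ n.choose 2 := by
    rw [Nat.choose_two_right, Nat.le_div_iff_mul_le two_pos]
    calc (h + 2) * n * 2 = n * (2 * (h + 2)) := by ring
      _ ≤ n * (n - 1) := by gcongr; omega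
  have hsaving : s + 2 * 2 ^ p ≤ (2 * s + h + 3 * p + 5) * 2 ^ (h + p) := by
    calc s + 2 * 2 ^ p ≤ s * 2 ^ (h + p) + 2 * 2 ^ (h + p) := by
          gcongr
          · exact Nat.le_mul_of_pos_right s (by positivity)
          · exact one_le_two
          · omega
      _ = (s + 2) * 2 ^ (h + p) := by ring
      _ ≤ _ := by gcongr <;> omega
  zify at hchoose hsaving
  linarith [mul_nonneg (Int.natCast_nonneg p) (pow_pos (two_pos (α := ℤ)) p).le]

lemma exists_connected_ncard_edgeSet_eq (hh : 1 ≤ h) (hs : h + p + 3 ≤ s) (hs' : 5 ≤ s)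
    (hn : n + 2 ^ (s + p + 1) ≤ 2 ^ (s + h + p + 2))
    (hn' : 2 ^ (s + h + p + 2) < n + 2 ^ (s + p + 2)) :
    ∃ G : SimpleGraph (Fin n), G.Connected ∧
      (G.edgeSet.ncard : ℤ) =
        (h + 2) * n - (2 * s + h + 3 * p + 5) * 2 ^ (h + p) + s - (p - 2) * 2 ^ p ∧
      ∀ u, broadcastTime G u ≤ s + h + p + 2 := by
  obtain ⟨G, hG, hcard⟩ := exists_isBroadcastProtocol_ncard_edgeSet_le_sub hh hs hs' hn hn'
  have hlt : 2 ^ (s + h + p + 1) < n := by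
    have : 2 ^ (s + p + 2) ≤ 2 ^ (s + h + p + 1) := Nat.pow_le_pow_right two_pos (by omega)
    rw [pow_succ 2 (s + h + p + 1)] at hn'
    omega
  have hchoose := edge_count_le_choose_two hs hlt
  obtain ⟨m, hm⟩ := Int.eq_ofNat_of_zero_le ((Int.natCast_nonneg _).trans hcard)
  rw [hm] at hcard hchoose
  have : Nonempty (Fin n) := ⟨⟨0, Nat.zero_lt_of_lt hlt⟩⟩
  obtain ⟨H, hconn, hHm, hH⟩ := exists_connected_broadcastTime_le hG (Nat.cast_le.1 hcard)
    (by rwa [Nat.card_fin, ← Nat.cast_le (α := ℤ)])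
  exact ⟨H, hconn, by rw [hHm, hm], hH⟩

end Parameters

/-- For `t ≥ 7`, `2 ≤ k ≤ ⌊t/2⌋ - 1`, `N = (2^k - 1)·2^(t+1-k)` and `2^t < n < N`, with
`d = N - n`, `x = ⌊d / 2^(t+1-k)⌋` and `p = ⌊log₂ (x+1)⌋` if `x > 0` (and `p = 0` if `x = 0`),
there is a connected graph on `n` vertices with exactly
`(k+1-p)·n - (2t - k + 2p + 4)·2^(k-1) + t - k - (p-2)·2^p` edges in which every vertex
has broadcast time at most `t + 1`. -/
theorem exists_broadcast_graph_of_n (t k n N d x p : ℕ) (ht : 7 ≤ t) (hk : 2 ≤ k)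
    (hk' : k ≤ t / 2 - 1) (hN : N = (2 ^ k - 1) * 2 ^ (t + 1 - k))
    (hn1 : 2 ^ t < n) (hn2 : n < N)
    (hd : d = N - n) (hx : x = d / 2 ^ (t + 1 - k))
    (hp : p = if 0 < x then Nat.log 2 (x + 1) else 0) :
    ∃ G : SimpleGraph (Fin n), G.Connected ∧
      (G.edgeSet.ncard : ℤ) =
        (k + 1 - p) * n - (2 * t - k + 2 * p + 4) * 2 ^ (k - 1) + t - k - (p - 2) * 2 ^ p ∧
      ∀ u, broadcastTime G u ≤ t + 1 := by
  have hp_log : p = Nat.log 2 (x + 1) := by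
    rcases x.eq_zero_or_pos with hx0 | hx0 <;> simp [hp, hx0]
  obtain ⟨hn_le, hn_gt⟩ : n + 2 ^ (t + 1 - k + p) ≤ 2 ^ (t + 1 - k + k) ∧
      2 ^ (t + 1 - k + k) < n + 2 ^ (t + 1 - k + p + 1) := by
    subst hN hd hx
    exact two_pow_log_gap_bounds hn2.le hp_log
  rw [Nat.sub_add_cancel (by omega)] at hn_le hn_gt
  have hp_lt : t + 1 - k + p < t := by
    refine (Nat.pow_lt_pow_iff_right one_lt_two).1 ?_
    rw [pow_succ] at hn_le
    omega
  obtain ⟨h, hh, rfl⟩ : ∃ h, 1 ≤ h ∧ k = h + p + 1 := ⟨k - p - 1, by omega, by omega⟩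
  obtain ⟨s, rfl⟩ : ∃ s, t = s + h + p + 1 := ⟨t - (h + p + 1), by omega⟩
  rw [show s + h + p + 1 + 1 - (h + p + 1) + p = s + p + 1 by omega] at hn_le hn_gt
  obtain ⟨G, hconn, hcard, hG⟩ :=
    exists_connected_ncard_edgeSet_eq hh (by omega) (by omega) hn_le hn_gt
  refine ⟨G, hconn, hcard.trans ?_, hG⟩
  rw [Nat.add_sub_cancel]
  push_cast
  ring
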